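/- The multiplicative elementary basis of Baxter satisfies E_{J_0} · E_{J_1} = E_{J_0 / J_1}, where J_0 / J_1 = (T^0_L \ T^1_L, T^0_R / T^1_R) for J_0 = (T^0_L, T^0_R) and J_1 = (T^1_L, T^1_R); similarly H_{J_0} · H_{J_1} = H_{J_0 \ J_1}. -/

import Mathlib

open scoped Classical

/-- Baxter adjacency relations on words over the alphabet of natural numbers. -/
def BaxterAdj (w w' : List ℕ) : Prop :=
  (∃ (a b c d : ℕ) (u v : List ℕ), a ≤ b ∧ b < c ∧ c ≤ d ∧
      w = c :: (u ++ a :: d :: (v ++ [b])) ∧ w' = c :: (u ++ d :: a :: (v ++ [b]))) ∨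
  (∃ (a b c d : ℕ) (u v : List ℕ), a < b ∧ b ≤ c ∧ c < d ∧
      w = b :: (u ++ d :: a :: (v ++ [c])) ∧ w' = b :: (u ++ a :: d :: (v ++ [c])))

/-- One rewriting step: an adjacency applied inside a word (congruence context). -/
def BaxterStep (w w' : List ℕ) : Prop :=
  ∃ (p s u v : List ℕ), BaxterAdj u v ∧ w = p ++ u ++ s ∧ w' = p ++ v ++ s

/-- The Baxter congruence: the equivalence generated by the Baxter steps. -/
def BaxterEquiv : List ℕ → List ℕ → Prop := Relation.EqvGen BaxterStep

/-- Sylvester adjacency: a c u b ≡ c a u b when a ≤ b < c. -/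
def SylvAdj (w w' : List ℕ) : Prop :=
  ∃ (a b c : ℕ) (u : List ℕ), a ≤ b ∧ b < c ∧
    w = a :: c :: (u ++ [b]) ∧ w' = c :: a :: (u ++ [b])

def SylvStep (w w' : List ℕ) : Prop :=
  ∃ (p s u v : List ℕ), SylvAdj u v ∧ w = p ++ u ++ s ∧ w' = p ++ v ++ s

def SylvEquiv : List ℕ → List ℕ → Prop := Relation.EqvGen SylvStep

/-- #-sylvester adjacency: b u a c ≡ b u c a when a < b ≤ c. -/
def SylvHAdj (w w' : List ℕ) : Prop :=
  ∃ (a b c : ℕ) (u : List ℕ), a < b ∧ b ≤ c ∧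
    w = b :: (u ++ [a, c]) ∧ w' = b :: (u ++ [c, a])

def SylvHStep (w w' : List ℕ) : Prop :=
  ∃ (p s u v : List ℕ), SylvHAdj u v ∧ w = p ++ u ++ s ∧ w' = p ++ v ++ s

def SylvHEquiv : List ℕ → List ℕ → Prop := Relation.EqvGen SylvHStep

/-- The standardized word of `u`: position `i` receives the rank of the letter `u i`
(ties broken from left to right), ranks starting at `1`. -/
def std (u : List ℕ) : List ℕ :=
  (List.range u.length).map fun i =>
    ((List.range u.length).filter fun j =>
      decide (u.getD j 0 < u.getD i 0 ∨ (u.getD j 0 = u.getD i 0 ∧ j < i))).length + 1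

/-- The maximal letter of a word. -/
def wordMax (u : List ℕ) : ℕ := u.foldr max 0

/-- The Schützenberger transformation: reverse and complement each letter w.r.t. max + 1. -/
def schutz (u : List ℕ) : List ℕ := u.reverse.map fun x => wordMax u + 1 - x

/-- Labeled binary trees. -/
inductive BT where
  | leaf : BT
  | node : BT → ℕ → BT → BT
deriving DecidableEq

/-- Leaf insertion into a left binary search tree. -/
def leafInsL : BT → ℕ → BT
  | .leaf, a => .node .leaf a .leaf
  | .node l b r, a => if a < b then .node (leafInsL l a) b r else .node l b (leafInsL r a)

/-- Leaf insertion into a right binary search tree. -/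
def leafInsR : BT → ℕ → BT
  | .leaf, a => .node .leaf a .leaf
  | .node l b r, a => if a ≤ b then .node (leafInsR l a) b r else .node l b (leafInsR r a)

/-- The lower restricted tree `T_{≤ a}` of a right binary search tree. -/
def splitLE : BT → ℕ → BT
  | .leaf, _ => .leaf
  | .node l b r, a => if b ≤ a then .node l b (splitLE r a) else splitLE l a

/-- The higher restricted tree `T_{> a}` of a right binary search tree. -/
def splitGT : BT → ℕ → BT
  | .leaf, _ => .leaf
  | .node l b r, a => if b ≤ a then splitGT r a else .node (splitGT l a) b r

/-- Root insertion into a right binary search tree. -/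
def rootIns (t : BT) (a : ℕ) : BT := .node (splitLE t a) a (splitGT t a)

/-- The left tree of the P-symbol: leaf insertions from left to right. -/
def insL (u : List ℕ) : BT := u.foldl leafInsL .leaf

/-- The right tree of the P-symbol: root insertions from left to right. -/
def insR (u : List ℕ) : BT := u.foldl rootIns .leaf

/-- The P-symbol of a word. -/
def Psymb (u : List ℕ) : BT × BT := (insL u, insR u)

/-- Unlabeled binary trees. -/
inductive UBT where
  | leaf : UBT
  | node : UBT → UBT → UBT
deriving DecidableEq

/-- The shape of a labeled binary tree. -/
def shape : BT → UBT
  | .leaf => .leaf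
  | .node l _ r => .node (shape l) (shape r)

/-- The shape of the P-symbol of a word. -/
def Pshape (u : List ℕ) : UBT × UBT := (shape (insL u), shape (insR u))

/-- Number of internal nodes. -/
def sizeU : UBT → ℕ
  | .leaf => 0
  | .node l r => sizeU l + sizeU r + 1

/-- Orientations of the leaves, from left to right: `true` means right-oriented
(the leaf is the right child of its parent); the parameter is the orientation
assigned if the tree is reduced to a leaf. -/
def loU : UBT → Bool → List Bool
  | .leaf, b => [b]
  | .node l r, _ => loU l false ++ loU r true

/-- Leaf orientations of a labeled binary tree. -/
def loB : BT → Bool → List Bool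
  | .leaf, b => [b]
  | .node l _ r, _ => loB l false ++ loB r true

/-- The canopy: orientations of the leaves except the first and the last one. -/
def canU (t : UBT) : List Bool := ((loU t false).drop 1).dropLast

/-- A pair of twin binary trees: same number of nodes and complementary canopies. -/
def IsTwin (J : UBT × UBT) : Prop :=
  sizeU J.1 = sizeU J.2 ∧ (canU J.1).length = (canU J.2).length ∧
    ∀ i < (canU J.1).length, (canU J.1).getD i false ≠ (canU J.2).getD i false

/-- `σ` is (the word of) a permutation of `{1, …, n}`. -/
def IsPerm (n : ℕ) (σ : List ℕ) : Prop := σ.Perm (List.range' 1 n)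

/-- Covering-type step of the right permutohedron (weak) order: exchange of two
adjacent letters `a < b`. -/
def PermutoStep (σ ν : List ℕ) : Prop :=
  ∃ (p s : List ℕ) (a b : ℕ), a < b ∧ σ = p ++ a :: b :: s ∧ ν = p ++ b :: a :: s

/-- The right permutohedron (weak) order. -/
def PermutoLe : List ℕ → List ℕ → Prop := Relation.ReflTransGen PermutoStep

/-- Baxter permutations: avoiding the generalized patterns 2-41-3 and 3-14-2. -/
def IsBaxterPerm (σ : List ℕ) : Prop :=
  ∀ i j k, i < j → j + 1 < k → k < σ.length →
    ¬(σ.getD (j+1) 0 < σ.getD i 0 ∧ σ.getD i 0 < σ.getD k 0 ∧ σ.getD k 0 < σ.getD j 0) ∧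
    ¬(σ.getD j 0 < σ.getD k 0 ∧ σ.getD k 0 < σ.getD i 0 ∧ σ.getD i 0 < σ.getD (j+1) 0)

/-- The free quasi-symmetric functions, modeled as finitely supported functions
on words (the fundamental basis element `F_σ` is `Finsupp.single σ 1`). -/
abbrev FQSym := List ℕ →₀ ℚ

/-- Model for `FQSym ⊗ FQSym`. -/
abbrev FQSym2 := (List ℕ × List ℕ) →₀ ℚ

/-- The list of shuffles of two words. -/
def shuffles : List ℕ → List ℕ → List (List ℕ)
  | [], v => [v]
  | u, [] => [u]
  | a :: u, b :: v =>
      (shuffles u (b :: v)).map (a :: ·) ++ (shuffles (a :: u) v).map (b :: ·)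
termination_by u v => u.length + v.length
decreasing_by all_goals (simp; try omega)

/-- The shifted shuffle of two permutations. -/
def shShuffles (σ ν : List ℕ) : List (List ℕ) := shuffles σ (ν.map (· + σ.length))

/-- The product of FQSym on the fundamental basis: shifted shuffle. -/
noncomputable def fqMul (x y : FQSym) : FQSym :=
  x.sum fun σ a => y.sum fun ν b =>
    ((shShuffles σ ν).map fun π => Finsupp.single π (a * b)).sum

/-- The coproduct of FQSym: deconcatenation followed by standardization. -/
noncomputable def fqCoprod (x : FQSym) : FQSym2 :=
  x.sum fun σ a =>
    ((List.range (σ.length + 1)).map fun i =>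
      Finsupp.single (std (σ.take i), std (σ.drop i)) a).sum

/-- The tensor product of two elements of FQSym, in the model `FQSym2`. -/
noncomputable def fqTensor (x y : FQSym) : FQSym2 :=
  x.sum fun σ a => y.sum fun ν b => Finsupp.single (σ, ν) (a * b)

/-- All permutations of `{1, …, n}` as words. -/
def permsOf (n : ℕ) : List (List ℕ) := (List.range' 1 n).permutations

/-- The basis element `P_J` of Baxter: the sum of `F_σ` over the permutations
of size `n` whose P-symbol has shape `J`. -/
noncomputable def PJ (n : ℕ) (J : UBT × UBT) : FQSym :=
  (((permsOf n).filter fun σ => decide (Pshape σ = J)).map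
    fun σ => Finsupp.single σ (1 : ℚ)).sum

/-- The Baxter order on pairs of twin binary trees, induced by the
permutohedron order via the insertion algorithm. -/
def leB (J0 J1 : UBT × UBT) : Prop :=
  ∃ (n : ℕ) (σ0 σ1 : List ℕ), IsPerm n σ0 ∧ IsPerm n σ1 ∧
    Pshape σ0 = J0 ∧ Pshape σ1 = J1 ∧ PermutoLe σ0 σ1

/-- The elementary basis element `E_J = Σ_{J ≤_B J'} P_{J'}`, expanded on the
fundamental basis of FQSym. -/
noncomputable def EJ (n : ℕ) (J : UBT × UBT) : FQSym :=
  (((permsOf n).filter fun σ => decide (leB J (Pshape σ))).map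
    fun σ => Finsupp.single σ (1 : ℚ)).sum

/-- The homogeneous basis element `H_J = Σ_{J' ≤_B J} P_{J'}`, expanded on the
fundamental basis of FQSym. -/
noncomputable def HJ (n : ℕ) (J : UBT × UBT) : FQSym :=
  (((permsOf n).filter fun σ => decide (leB (Pshape σ) J)).map
    fun σ => Finsupp.single σ (1 : ℚ)).sum

/-- `t / t'` : graft `t` on the leftmost leaf of `t'`. -/
def graftL (t : UBT) : UBT → UBT
  | .leaf => t
  | .node l r => .node (graftL t l) r

/-- `t \ t'` : graft `t'` on the rightmost leaf of `t`. -/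
def graftR : UBT → UBT → UBT
  | .leaf, t' => t'
  | .node l r, t' => .node l (graftR r t')

/-- `J0 / J1 = (T⁰_L \ T¹_L, T⁰_R / T¹_R)`. -/
def overJ (J0 J1 : UBT × UBT) : UBT × UBT := (graftR J0.1 J1.1, graftL J0.2 J1.2)

/-- `J0 \ J1 = (T⁰_L / T¹_L, T⁰_R \ T¹_R)`. -/
def underJ (J0 J1 : UBT × UBT) : UBT × UBT := (graftL J0.1 J1.1, graftR J0.2 J1.2)

/-!
The P-symbols of two permutations coincide if and only if on every interval of letters their first
letters coincide and so do their last letters. In a word avoiding 2-41-3 and 3-41-2, transitivity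
yields all inversions from those `d ⋯ a` for which `d` is the first or `a` the last letter in
`[a, d]`; the latter are determined by the P-symbol and persist upwards in the weak order. As every
P-symbol is attained by such a word, `J` is below the P-symbol of `π` in the Baxter order if and
only if some word with P-symbol `J` is below `π` itself in the weak order.

For fixed `π`, this condition is compatible with restriction to the letters at most `n` and to the
letters greater than `n`, which on P-symbols undoes the grafting `J₀ / J₁`. Since the shifted
shuffles of `σ` and `ν` are the permutations having these two restrictions, the product of the
elementary basis follows. Reversing words reverses the weak order and exchanges the two trees of the
P-symbol, which carries this over to the homogeneous basis.
-/

namespace Baxter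

open scoped List

section Words

variable {α : Type*} {x y z : α} {l u v : List α}

theorem pair_sublist_cons {b : α} : [x, y] <+ b :: l ↔ x = b ∧ y ∈ l ∨ [x, y] <+ l := by
  rw [List.cons_sublist_cons', List.singleton_sublist, or_comm]

theorem pair_sublist_append :
    [x, y] <+ u ++ v ↔ [x, y] <+ u ∨ [x, y] <+ v ∨ x ∈ u ∧ y ∈ v := by
  induction u with
  | nil => simp
  | cons b u ih =>
    simp only [List.cons_append, pair_sublist_cons, ih, List.mem_append, List.mem_cons]
    tauto

theorem pair_sublist_filter {p : α → Bool} :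
    [x, y] <+ l.filter p ↔ p x ∧ p y ∧ [x, y] <+ l := by
  refine ⟨fun h => ⟨?_, ?_, h.trans List.filter_sublist⟩, fun ⟨hx, hy, h⟩ => ?_⟩
  · exact (List.mem_filter.1 (h.subset (by simp))).2
  · exact (List.mem_filter.1 (h.subset (by simp))).2
  · simpa [hx, hy] using h.filter p

theorem pair_sublist_reverse : [x, y] <+ l.reverse ↔ [y, x] <+ l := by
  simpa using List.reverse_sublist (l₁ := [y, x]) (l₂ := l)

theorem pair_sublist_map {β : Type*} {f : α → β} (hf : Function.Injective f) :
    [f x, f y] <+ l.map f ↔ [x, y] <+ l := by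
  refine ⟨fun h => ?_, fun h => h.map f⟩
  obtain ⟨l', hl', h⟩ := List.sublist_map_iff.1 h
  exact List.map_injective_iff.2 hf (a₁ := [x, y]) h ▸ hl'

theorem pair_sublist_trans (hl : l.Nodup) (hxy : [x, y] <+ l) (hyz : [y, z] <+ l) :
    [x, z] <+ l := by
  induction l with
  | nil => simp at hxy
  | cons b l ih =>
    have hy : [x, y] <+ l → y ∈ l := fun h => h.subset (by simp)
    have hz : [y, z] <+ l → z ∈ l := fun h => h.subset (by simp)
    simp only [pair_sublist_cons, List.nodup_cons] at *
    grind

theorem find?_eq_some_iff_pair_sublist (hl : l.Nodup) {p : α → Bool} :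
    l.find? p = some x ↔ x ∈ l ∧ p x ∧ ∀ z ∈ l, p z → z ≠ x → [x, z] <+ l := by
  induction l with
  | nil => simp
  | cons b l ih =>
    simp only [pair_sublist_cons, List.nodup_cons, List.find?_cons, List.mem_cons] at *
    grind [List.Sublist.subset]

end Words

section WeakOrder

variable {α β : Type*} {σ ν : List α}

/-- Every inversion of `σ`, i.e. every pair of letters `a < d` with `d` occurring before `a`, is
an inversion of `ν`. On the words with a given set of letters this is the weak order. -/
def InversionLE [LT α] (σ ν : List α) : Prop := ∀ ⦃a d : α⦄, a < d → [d, a] <+ σ → [d, a] <+ ν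

theorem InversionLE.filter [LT α] (h : InversionLE σ ν) (p : α → Bool) :
    InversionLE (σ.filter p) (ν.filter p) := fun a d had hda => by
  rw [pair_sublist_filter] at hda ⊢
  exact ⟨hda.1, hda.2.1, h had hda.2.2⟩

theorem inversionLE_map_iff [LinearOrder α] [Preorder β] {f : α → β} (hf : StrictMono f) :
    InversionLE (σ.map f) (ν.map f) ↔ InversionLE σ ν := by
  constructor <;> intro h a d had hda
  · rw [← pair_sublist_map hf.injective] at hda ⊢
    exact h (hf had) hda
  · obtain ⟨d, -, rfl⟩ := List.mem_map.1 (hda.subset (by simp : d ∈ [d, a]))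
    obtain ⟨a, -, rfl⟩ := List.mem_map.1 (hda.subset (by simp : a ∈ [f d, a]))
    rw [pair_sublist_map hf.injective] at hda ⊢
    exact h (hf.lt_iff_lt.1 had) hda

theorem InversionLE.append [Preorder α] {π : List α} (hσν : ∀ x ∈ σ, ∀ y ∈ ν, x < y)
    (hσ : InversionLE σ π) (hν : InversionLE ν π) : InversionLE (σ ++ ν) π := by
  intro a d had hda
  rcases pair_sublist_append.1 hda with h | h | ⟨hd, ha⟩
  · exact hσ had h
  · exact hν had h
  · exact absurd (hσν d hd a ha) had.asymm

/-- On every interval `[a, d]` of letters, if the first letter of `σ` is the largest one `d`, then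
so is the first letter of `ν`, and if the last letter of `σ` is the smallest one `a`, then so is the
last letter of `ν`. -/
def EndsLE [LinearOrder α] (σ ν : List α) : Prop :=
  ∀ a d : α, (σ.find? (· ∈ Set.Icc a d) = some d → ν.find? (· ∈ Set.Icc a d) = some d) ∧
    (σ.reverse.find? (· ∈ Set.Icc a d) = some a → ν.reverse.find? (· ∈ Set.Icc a d) = some a)

theorem InversionLE.endsLE [LinearOrder α] (h : InversionLE σ ν) (hp : σ ~ ν) (hν : ν.Nodup) :
    EndsLE σ ν := by
  refine fun a d => ⟨fun hσ => ?_, fun hσ => ?_⟩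
  · rw [find?_eq_some_iff_pair_sublist (hp.nodup_iff.2 hν)] at hσ
    rw [find?_eq_some_iff_pair_sublist hν]
    refine ⟨hp.mem_iff.1 hσ.1, hσ.2.1, fun z hz hzI hzd => ?_⟩
    exact h (lt_of_le_of_ne (of_decide_eq_true hzI).2 hzd) (hσ.2.2 z (hp.mem_iff.2 hz) hzI hzd)
  · rw [find?_eq_some_iff_pair_sublist (List.nodup_reverse.2 (hp.nodup_iff.2 hν))] at hσ
    rw [find?_eq_some_iff_pair_sublist (List.nodup_reverse.2 hν)]
    simp only [List.mem_reverse, pair_sublist_reverse] at hσ ⊢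
    refine ⟨hp.mem_iff.1 hσ.1, hσ.2.1, fun z hz hzI hza => ?_⟩
    exact h (lt_of_le_of_ne (of_decide_eq_true hzI).1 hza.symm)
      (hσ.2.2 z (hp.mem_iff.2 hz) hzI hza)

end WeakOrder

section Permutohedron

variable {σ ν : List ℕ}

theorem inversionLE_of_permutoStep (h : PermutoStep σ ν) : InversionLE σ ν := by
  obtain ⟨p, s, a, b, hab, rfl, rfl⟩ := h
  intro x y hxy
  simp only [pair_sublist_append, pair_sublist_cons, List.mem_cons]
  grind

theorem inversionLE_of_permutoLe (h : PermutoLe σ ν) : InversionLE σ ν := by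
  induction h with
  | refl => exact fun _ _ _ h => h
  | tail _ hstep ih => exact fun a d had h => inversionLE_of_permutoStep hstep had (ih had h)

theorem permutoLe_cons (x : ℕ) (h : PermutoLe σ ν) : PermutoLe (x :: σ) (x :: ν) := by
  refine Relation.ReflTransGen.lift (x :: ·) ?_ _ _ h
  rintro _ _ ⟨p, s, a, b, hab, rfl, rfl⟩
  exact ⟨x :: p, s, a, b, hab, rfl, rfl⟩

theorem permutoLe_cons_of_forall_lt {x : ℕ} {p : List ℕ} (s : List ℕ) (h : ∀ y ∈ p, y < x) :
    PermutoLe (p ++ x :: s) (x :: (p ++ s)) := by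
  induction p with
  | nil => exact .refl
  | cons b p ih =>
    rw [List.forall_mem_cons] at h
    exact (permutoLe_cons b (ih h.2)).tail ⟨[], p ++ s, b, x, h.1, rfl, rfl⟩

theorem permutoLe_of_inversionLE (hp : σ ~ ν) (hν : ν.Nodup) (h : InversionLE σ ν) :
    PermutoLe σ ν := by
  induction ν generalizing σ with
  | nil => exact hp.eq_nil ▸ .refl
  | cons x ν ih =>
    obtain ⟨p, s, rfl⟩ := List.append_of_mem (hp.mem_iff.2 List.mem_cons_self)
    have hps : p ++ s ~ ν := (List.perm_middle.symm.trans hp).cons_inv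
    obtain ⟨hxν, hν⟩ := List.nodup_cons.1 hν
    have hx : x ∉ p ++ s := mt hps.mem_iff.1 hxν
    have hlt : ∀ y ∈ p, y < x := by
      intro y hy
      by_contra! hxy
      have hne : x ≠ y := by grind
      have := h (lt_of_le_of_ne hxy hne) (pair_sublist_append.2 (by simp [hy]))
      rcases pair_sublist_cons.1 this with ⟨rfl, -⟩ | this
      · exact hne rfl
      · exact hxν (this.subset (by simp))
    refine (permutoLe_cons_of_forall_lt s hlt).trans (permutoLe_cons x (ih hps hν ?_))
    intro a d had hda
    have hd : d ∈ p ++ s := hda.subset (by simp)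
    have := h had (hda.trans ((List.sublist_cons_self x s).append_left p))
    exact (pair_sublist_cons.1 this).resolve_left fun h => hx (h.1 ▸ hd)

theorem permutoLe_reverse (h : PermutoLe σ ν) : PermutoLe ν.reverse σ.reverse := by
  induction h with
  | refl => exact .refl
  | tail _ hstep ih =>
    obtain ⟨p, s, a, b, hab, rfl, rfl⟩ := hstep
    exact .head ⟨s.reverse, p.reverse, a, b, hab, by simp, by simp⟩ ih

end Permutohedron

section SameEnds

variable {α : Type*}

/-- On every interval of letters, the two words have the same first letter. For words without
repetition this says that their binary search trees coincide: the first letter in `[x, y]` is the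
lowest common ancestor of `x` and `y`. -/
def SameFirst [Preorder α] (σ ν : List α) : Prop :=
  ∀ (s : Set α) [DecidablePred (· ∈ s)], s.OrdConnected → σ.find? (· ∈ s) = ν.find? (· ∈ s)

/-- On every interval of letters, the two words have the same first letter and the same last
letter. For permutations of the same letters this says that the P-symbols coincide. -/
def SameEnds [Preorder α] (σ ν : List α) : Prop :=
  SameFirst σ ν ∧ SameFirst σ.reverse ν.reverse

/-- The word avoids the patterns 2-41-3 and 3-41-2: it has no descent `p q` such that letters
strictly between `q` and `p` occur both before and after it. -/
def AvoidsEnclosedDescent [Preorder α] (τ : List α) : Prop :=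
  ∀ ⦃u v : List α⦄ ⦃p q x y : α⦄, τ = u ++ p :: q :: v → x ∈ u → y ∈ v →
    x ∈ Set.Ioo q p → y ∉ Set.Ioo q p

theorem sameFirst_swap [Preorder α] {u : List α} {x p q : α} (hx : x ∈ u) (hqp : x ∈ Set.Ioo q p)
    (v : List α) : SameFirst (u ++ p :: q :: v) (u ++ q :: p :: v) := by
  intro s _ hs
  by_cases hpq : p ∈ s ∧ q ∈ s
  · have hxs : x ∈ s := hs.out hpq.2 hpq.1 (Set.Ioo_subset_Icc_self hqp)
    have hu : (u.find? (· ∈ s)).isSome := List.find?_isSome.2 ⟨x, hx, by simpa using hxs⟩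
    rw [List.find?_append, List.find?_append, Option.or_of_isSome hu, Option.or_of_isSome hu]
  · rw [List.find?_append, List.find?_append]
    grind

theorem SameFirst.symm [Preorder α] {σ ν : List α} (h : SameFirst σ ν) : SameFirst ν σ :=
  fun s _ hs => (h s hs).symm

theorem sameEnds_swap [Preorder α] {u v : List α} {x y p q : α} (hx : x ∈ u) (hy : y ∈ v)
    (hxqp : x ∈ Set.Ioo q p) (hyqp : y ∈ Set.Ioo q p) :
    SameEnds (u ++ q :: p :: v) (u ++ p :: q :: v) := by
  refine ⟨(sameFirst_swap hx hxqp v).symm, ?_⟩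
  simpa using sameFirst_swap (List.mem_reverse.2 hy) hyqp u.reverse

theorem SameEnds.trans [Preorder α] {ρ σ ν : List α} (h : SameEnds ρ σ) (h' : SameEnds σ ν) :
    SameEnds ρ ν :=
  ⟨fun s _ hs => (h.1 s hs).trans (h'.1 s hs), fun s _ hs => (h.2 s hs).trans (h'.2 s hs)⟩

theorem exists_sameEnds_avoidsEnclosedDescent [LinearOrder α] (σ : List α) :
    ∃ τ, τ ~ σ ∧ SameEnds τ σ ∧ AvoidsEnclosedDescent τ := by
  have hfin : {τ | τ ~ σ ∧ SameEnds τ σ}.Finite :=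
    (List.finite_toSet σ.permutations).subset fun τ hτ => List.mem_permutations.2 hτ.1
  -- Undoing an enclosed descent makes a word lexicographically smaller.
  obtain ⟨τ, ⟨hτσ, hτ⟩, hmin⟩ := Set.exists_min_image _ id hfin
    ⟨σ, .refl σ, fun _ _ _ => rfl, fun _ _ _ => rfl⟩
  refine ⟨τ, hτσ, hτ, ?_⟩
  rintro u v p q x y rfl hx hy hxqp hyqp
  have hlt : u ++ q :: p :: v < u ++ p :: q :: v :=
    List.append_left_lt (List.Lex.rel (hxqp.1.trans hxqp.2))
  exact (hmin (u ++ q :: p :: v) ⟨((List.Perm.swap p q v).append_left u).trans hτσ,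
    (sameEnds_swap hx hy hxqp hyqp).trans hτ⟩).not_gt hlt

theorem exists_descent_across [LinearOrder α] {a d p : α} (hp : d ≤ p) (m : List α)
    (hm : ∀ z ∈ m, z ∉ Set.Ioo a d) :
    ∃ u p' q v, p :: (m ++ [a]) = u ++ p' :: q :: v ∧ d ≤ p' ∧ q ≤ a := by
  induction m generalizing p with
  | nil => exact ⟨[], p, a, [], rfl, hp, le_rfl⟩
  | cons b m ih =>
    rw [List.forall_mem_cons] at hm
    rcases le_or_gt b a with hb | hb
    · exact ⟨[], p, b, m ++ [a], rfl, hp, hb⟩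
    · have hdb : d ≤ b := not_lt.1 fun hbd => hm.1 ⟨hb, hbd⟩
      obtain ⟨u, p', q, v, e, hp', hq⟩ := ih hdb hm.2
      exact ⟨p :: u, p', q, v, by simp [← e], hp', hq⟩

theorem AvoidsEnclosedDescent.find?_Icc [LinearOrder α] {u m v : List α} {a d : α}
    (h : AvoidsEnclosedDescent (u ++ d :: (m ++ a :: v)))
    (hn : (u ++ d :: (m ++ a :: v)).Nodup) (had : a < d) (hm : ∀ z ∈ m, z ∉ Set.Ioo a d) :
    (u ++ d :: (m ++ a :: v)).find? (· ∈ Set.Icc a d) = some d ∨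
      (u ++ d :: (m ++ a :: v)).reverse.find? (· ∈ Set.Icc a d) = some a := by
  by_cases hu : ∀ x ∈ u, x ∉ Set.Icc a d
  · left
    rw [List.find?_eq_some_iff_append]
    exact ⟨by simpa using had.le, u, _, rfl,
      by simpa only [Bool.not_eq_true', decide_eq_false_iff_not] using hu⟩
  by_cases hv : ∀ y ∈ v, y ∉ Set.Icc a d
  · right
    rw [List.find?_eq_some_iff_append]
    exact ⟨by simpa using had.le, v.reverse, m.reverse ++ d :: u.reverse, by simp,
      by simpa only [Bool.not_eq_true', decide_eq_false_iff_not, List.mem_reverse] using hv⟩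
  exfalso
  push Not at hu hv
  obtain ⟨x, hxu, hx⟩ := hu
  obtain ⟨y, hyv, hy⟩ := hv
  have hne : x ≠ a ∧ x ≠ d ∧ y ≠ a ∧ y ≠ d := by
    simp only [List.nodup_append, List.nodup_cons, List.mem_cons, List.mem_append] at hn
    grind
  obtain ⟨u', p, q, v', e, hp, hq⟩ := exists_descent_across le_rfl m hm
  refine h (u := u ++ u') (v := v' ++ v) (p := p) (q := q) ?_ (List.mem_append_left u' hxu)
    (List.mem_append_right v' hyv) ⟨?_, ?_⟩ ⟨?_, ?_⟩
  · calc u ++ d :: (m ++ a :: v) = u ++ (d :: (m ++ [a])) ++ v := by simp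
      _ = u ++ u' ++ p :: q :: (v' ++ v) := by simp [e]
  · exact hq.trans_lt (lt_of_le_of_ne hx.1 hne.1.symm)
  · exact (lt_of_le_of_ne hx.2 hne.2.1).trans_le hp
  · exact hq.trans_lt (lt_of_le_of_ne hy.1 hne.2.2.1.symm)
  · exact (lt_of_le_of_ne hy.2 hne.2.2.2).trans_le hp

-- A letter of `m` strictly between `a` and `d` splits the inversion into two shorter ones. If there
-- is none, `d` is the first or `a` the last letter of `τ` in `[a, d]`, and `EndsLE` applies.
theorem AvoidsEnclosedDescent.pair_sublist [LinearOrder α] {τ π : List α}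
    (hτ : AvoidsEnclosedDescent τ) (h : EndsLE τ π) (hp : τ ~ π) (hπ : π.Nodup)
    (m : List α) {u v : List α} {a d : α} (e : τ = u ++ d :: (m ++ a :: v)) (had : a < d) :
    [d, a] <+ π := by
  have hd : d ∈ π := hp.subset (by simp [e])
  have ha : a ∈ π := hp.subset (by simp [e])
  by_cases hm : ∀ z ∈ m, z ∉ Set.Ioo a d
  · rcases (e ▸ hτ).find?_Icc (e ▸ hp.nodup_iff.2 hπ) had hm with hfirst | hlast
    · have hfirst := (find?_eq_some_iff_pair_sublist hπ).1 ((h a d).1 (e ▸ hfirst))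
      exact hfirst.2.2 a ha (by simpa using had.le) had.ne
    · have hlast := (find?_eq_some_iff_pair_sublist (List.nodup_reverse.2 hπ)).1
        ((h a d).2 (e ▸ hlast))
      exact pair_sublist_reverse.1
        (hlast.2.2 d (List.mem_reverse.2 hd) (by simpa using had.le) had.ne')
  · push Not at hm
    obtain ⟨z, hz, haz, hzd⟩ := hm
    obtain ⟨m₁, m₂, rfl⟩ := List.append_of_mem hz
    have hdz : [d, z] <+ π := hτ.pair_sublist h hp hπ m₁ (by simpa using e) hzd
    have hza : [z, a] <+ π := hτ.pair_sublist h hp hπ m₂ (u := u ++ d :: m₁) (by simpa using e) haz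
    exact pair_sublist_trans hπ hdz hza
termination_by m.length
decreasing_by all_goals (subst_vars; simp; try omega)

theorem AvoidsEnclosedDescent.inversionLE [LinearOrder α] {τ π : List α}
    (hτ : AvoidsEnclosedDescent τ) (h : EndsLE τ π) (hp : τ ~ π) (hπ : π.Nodup) :
    InversionLE τ π := by
  intro a d had hda
  obtain ⟨w, w', rfl, hd, ha⟩ := List.cons_sublist_iff.1 hda
  obtain ⟨u, m₁, rfl⟩ := List.append_of_mem hd
  obtain ⟨m₂, v, rfl⟩ := List.append_of_mem (List.singleton_sublist.1 ha)
  exact hτ.pair_sublist h hp hπ (m₁ ++ m₂) (u := u) (v := v) (by simp) had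

theorem exists_sameEnds_inversionLE [LinearOrder α] {σ₀ σ₁ π : List α} (h₀ : σ₀ ~ π)
    (h₁ : σ₁ ~ π) (hπ : π.Nodup) (hle : InversionLE σ₀ σ₁) (hσ₁ : SameEnds σ₁ π) :
    ∃ τ, τ ~ π ∧ SameEnds τ σ₀ ∧ InversionLE τ π := by
  obtain ⟨τ, hτσ₀, hτ, havoid⟩ := exists_sameEnds_avoidsEnclosedDescent σ₀
  have hends : EndsLE σ₀ σ₁ := hle.endsLE (h₀.trans h₁.symm) (h₁.nodup_iff.2 hπ)
  refine ⟨τ, hτσ₀.trans h₀, hτ, havoid.inversionLE (fun a d => ⟨fun h => ?_, fun h => ?_⟩)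
    (hτσ₀.trans h₀) hπ⟩
  · rw [← hσ₁.1 (Set.Icc a d) Set.ordConnected_Icc]
    exact (hends a d).1 (hτ.1 (Set.Icc a d) Set.ordConnected_Icc ▸ h)
  · rw [← hσ₁.2 (Set.Icc a d) Set.ordConnected_Icc]
    exact (hends a d).2 (hτ.2 (Set.Icc a d) Set.ordConnected_Icc ▸ h)

end SameEnds

section Insertion

variable {σ ν w : List ℕ}

@[elab_as_elim]
theorem pivot_induction {motive : List ℕ → Prop} (w : List ℕ) (nil : motive [])
    (cons : ∀ a w, motive (w.filter (· < a)) → motive (w.filter (a ≤ ·)) → motive (a :: w)) :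
    motive w :=
  match w with
  | [] => nil
  | a :: w => cons a w (pivot_induction _ nil cons) (pivot_induction _ nil cons)
termination_by w.length
decreasing_by all_goals exact Nat.lt_succ_of_le (List.length_filter_le _ _)

theorem foldl_leafInsL_node (l r : BT) (b : ℕ) (w : List ℕ) :
    w.foldl leafInsL (.node l b r) =
      .node ((w.filter (· < b)).foldl leafInsL l) b ((w.filter (b ≤ ·)).foldl leafInsL r) := by
  induction w generalizing l r with
  | nil => rfl
  | cons a w ih =>
    rw [List.foldl_cons, leafInsL]
    split_ifs with h
    · rw [ih, List.filter_cons_of_pos (by simpa), List.filter_cons_of_neg (by simpa)]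
      rfl
    · rw [ih, List.filter_cons_of_neg (by simpa using h),
        List.filter_cons_of_pos (by simpa using h)]
      rfl

theorem insL_nil : insL [] = .leaf := rfl

theorem insL_cons (a : ℕ) (w : List ℕ) :
    insL (a :: w) = .node (insL (w.filter (· < a))) a (insL (w.filter (a ≤ ·))) :=
  foldl_leafInsL_node .leaf .leaf a w

theorem length_filter_lt_add_length_filter_le (a : ℕ) (w : List ℕ) :
    (w.filter (· < a)).length + (w.filter (a ≤ ·)).length = w.length := by
  simpa only [← decide_not, not_lt] using (List.length_eq_length_filter_add (l := w) (· < a)).symm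

theorem sizeU_shape_insL (w : List ℕ) : sizeU (shape (insL w)) = w.length := by
  induction w using pivot_induction with
  | nil => rfl
  | cons a w hl hr =>
    rw [insL_cons, shape, sizeU, hl, hr, length_filter_lt_add_length_filter_le, List.length_cons]

theorem splitLE_insL (w : List ℕ) (n : ℕ) : splitLE (insL w) n = insL (w.filter (· ≤ n)) := by
  induction w using pivot_induction with
  | nil => rfl
  | cons a w hl hr =>
    rw [insL_cons, splitLE]
    split_ifs with h
    · rw [List.filter_cons_of_pos (by simpa), insL_cons, hr]
      simp only [List.filter_filter]
      congr 2 <;> refine List.filter_congr fun x _ => ?_ <;> grind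
    · rw [List.filter_cons_of_neg (by simpa using h), hl]
      simp only [List.filter_filter]
      congr 1
      exact List.filter_congr fun x _ => by grind

theorem splitGT_insL (w : List ℕ) (n : ℕ) : splitGT (insL w) n = insL (w.filter (n < ·)) := by
  induction w using pivot_induction with
  | nil => rfl
  | cons a w hl hr =>
    rw [insL_cons, splitGT]
    split_ifs with h
    · rw [List.filter_cons_of_neg (by simpa), hr]
      simp only [List.filter_filter]
      congr 1
      exact List.filter_congr fun x _ => by grind
    · rw [List.filter_cons_of_pos (by simpa using h), insL_cons, hl]
      simp only [List.filter_filter]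
      congr 2 <;> refine List.filter_congr fun x _ => ?_ <;> grind

theorem insR_eq_insL_reverse (h : w.Nodup) : insR w = insL w.reverse := by
  induction w using List.reverseRecOn with
  | nil => rfl
  | append_singleton w a ih =>
    have ha : a ∉ w := by grind
    rw [insR, List.foldl_concat, ← insR, ih (by grind), rootIns, splitLE_insL, splitGT_insL,
      List.reverse_concat, insL_cons]
    congr 2 <;> refine List.filter_congr fun x hx => ?_ <;>
      have hxa : x ≠ a := fun e => ha (e ▸ List.mem_reverse.1 hx)
    all_goals grind

theorem pshape_eq (h : w.Nodup) : Pshape w = (shape (insL w), shape (insL w.reverse)) := by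
  rw [Pshape, insR_eq_insL_reverse h]

theorem pshape_reverse (h : w.Nodup) : Pshape w.reverse = (Pshape w).swap := by
  rw [pshape_eq h, pshape_eq (List.nodup_reverse.2 h), List.reverse_reverse, Prod.swap]

theorem eq_of_length_filter_lt_eq {l : List ℕ} {a b : ℕ} (ha : a ∈ l) (hb : b ∈ l)
    (h : (l.filter (· < a)).length = (l.filter (· < b)).length) : a = b := by
  wlog hab : a < b generalizing a b
  · rcases eq_or_lt_of_not_gt hab with e | hba
    · exact e.symm
    · exact (this hb ha h.symm hba).symm
  have hsub : l.filter (· < a) <+ l.filter (· < b) :=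
    List.monotone_filter_right l fun x hx => by
      simp only [decide_eq_true_eq] at hx ⊢
      exact hx.trans hab
  have : a ∈ l.filter (· < a) := hsub.eq_of_length h ▸ List.mem_filter.2 ⟨ha, by simpa⟩
  simp at this

theorem insL_eq_of_shape_eq (hp : σ ~ ν) (h : shape (insL σ) = shape (insL ν)) :
    insL σ = insL ν := by
  induction σ using pivot_induction generalizing ν with
  | nil => rw [hp.nil_eq]
  | cons a σ hl hr =>
    obtain _ | ⟨b, ν⟩ := ν
    · simp at hp
    rw [insL_cons, insL_cons, shape, shape, UBT.node.injEq] at h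
    have filter_lt_cons (c : ℕ) (w : List ℕ) : (c :: w).filter (· < c) = w.filter (· < c) :=
      List.filter_cons_of_neg (by simp)
    have hlen := congrArg sizeU h.1
    rw [sizeU_shape_insL, sizeU_shape_insL, ← filter_lt_cons a, ← filter_lt_cons b,
      ← (hp.filter _).length_eq] at hlen
    obtain rfl := eq_of_length_filter_lt_eq List.mem_cons_self
      (hp.mem_iff.2 List.mem_cons_self) hlen
    have hp := hp.cons_inv
    rw [insL_cons, insL_cons, hl (hp.filter _) h.1, hr (hp.filter _) h.2]

theorem sameFirst_cons_iff {a : ℕ} (hσ : a ∉ σ) (hν : a ∉ ν) :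
    SameFirst (a :: σ) (a :: ν) ↔ SameFirst (σ.filter (· < a)) (ν.filter (· < a)) ∧
      SameFirst (σ.filter (a ≤ ·)) (ν.filter (a ≤ ·)) := by
  refine ⟨fun h => ⟨fun s _ hs => ?_, fun s _ hs => ?_⟩, fun h s _ hs => ?_⟩
  · simpa [List.find?_filter] using h (Set.Iio a ∩ s) (Set.ordConnected_Iio.inter hs)
  · have hle {w : List ℕ} (hw : a ∉ w) :
        (w.filter (a ≤ ·)).find? (· ∈ s) = (a :: w).find? (· ∈ Set.Ioi a ∩ s) := by
      rw [List.find?_filter, List.find?_cons_of_neg (by simp)]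
      refine List.find?_congr fun x hx => ?_
      have : x ≠ a := fun e => hw (e ▸ hx)
      simp [this.symm.le_iff_lt]
    rw [hle hσ, hle hν, h _ (Set.ordConnected_Ioi.inter hs)]
  · by_cases ha : a ∈ s
    · simp [ha]
    rw [List.find?_cons_of_neg (by simpa), List.find?_cons_of_neg (by simpa)]
    have hside : (∀ x ∈ s, x < a) ∨ ∀ x ∈ s, a ≤ x := by
      by_contra! ⟨⟨x, hx, hax⟩, y, hy, hya⟩
      exact ha (hs.out hy hx ⟨hya.le, hax⟩)
    rcases hside with hlt | hle
    · have hfind (w : List ℕ) : (w.filter (· < a)).find? (· ∈ s) = w.find? (· ∈ s) := by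
        rw [List.find?_filter]
        exact List.find?_congr fun x _ => by simpa using hlt x
      rw [← hfind σ, ← hfind ν, h.1 s hs]
    · have hfind (w : List ℕ) : (w.filter (a ≤ ·)).find? (· ∈ s) = w.find? (· ∈ s) := by
        rw [List.find?_filter]
        exact List.find?_congr fun x _ => by simpa using hle x
      rw [← hfind σ, ← hfind ν, h.2 s hs]

theorem SameFirst.head?_eq (h : SameFirst σ ν) : σ.head? = ν.head? := by
  have hfind (w : List ℕ) : w.find? (· ∈ Set.univ) = w.head? := by cases w <;> simp
  rw [← hfind, ← hfind, h _ Set.ordConnected_univ]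

theorem insL_eq_insL_iff (hσ : σ.Nodup) (hν : ν.Nodup) : insL σ = insL ν ↔ SameFirst σ ν := by
  induction σ using pivot_induction generalizing ν with
  | nil =>
    cases ν with
    | nil => exact iff_of_true rfl fun _ _ _ => rfl
    | cons b ν =>
      exact iff_of_false (by simp [insL_cons, insL_nil]) fun h => by simpa using h.head?_eq
  | cons a σ hl hr =>
    obtain _ | ⟨b, ν⟩ := ν
    · exact iff_of_false (by simp [insL_cons, insL_nil]) fun h => by simpa using h.head?_eq
    rw [List.nodup_cons] at hσ hν
    by_cases hab : a = b
    · subst hab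
      rw [insL_cons, insL_cons, BT.node.injEq, hl (hσ.2.filter _) (hν.2.filter _),
        hr (hσ.2.filter _) (hν.2.filter _), sameFirst_cons_iff hσ.1 hν.1, eq_self, true_and]
    · refine iff_of_false (fun h => hab ?_) fun h => hab (by simpa using h.head?_eq)
      rw [insL_cons, insL_cons, BT.node.injEq] at h
      exact h.2.1

theorem pshape_eq_iff (hp : σ ~ ν) (hν : ν.Nodup) : Pshape σ = Pshape ν ↔ SameEnds σ ν := by
  have hσ : σ.Nodup := hp.nodup_iff.2 hν
  have shape_eq_iff {σ ν : List ℕ} (hp : σ ~ ν) (hν : ν.Nodup) :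
      shape (insL σ) = shape (insL ν) ↔ SameFirst σ ν := by
    rw [← insL_eq_insL_iff (hp.nodup_iff.2 hν) hν]
    exact ⟨insL_eq_of_shape_eq hp, congrArg shape⟩
  rw [pshape_eq hσ, pshape_eq hν, Prod.mk.injEq, shape_eq_iff hp hν,
    shape_eq_iff ((List.reverse_perm σ).trans (hp.trans (List.reverse_perm ν).symm))
      (List.nodup_reverse.2 hν), SameEnds]

end Insertion

section BaxterOrder

variable {n : ℕ} {J : UBT × UBT} {π : List ℕ}

/-- Some word on the letters of `π` with P-symbol of shape `J` lies below `π` in the weak order. For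
a permutation `π` this says that `J` is below the P-symbol of `π` in the Baxter order, but it also
makes sense for the restrictions of `π` to intervals of letters. -/
def IsBelow (J : UBT × UBT) (π : List ℕ) : Prop :=
  ∃ σ, σ ~ π ∧ Pshape σ = J ∧ InversionLE σ π

theorem isPerm_nodup (h : IsPerm n π) : π.Nodup := h.nodup_iff.2 List.nodup_range'

theorem isPerm_length (h : IsPerm n π) : π.length = n := by simpa using h.length_eq

theorem sizeU_pshape_fst (w : List ℕ) : sizeU (Pshape w).1 = w.length := sizeU_shape_insL w

theorem leB_pshape_iff_isBelow (hπ : IsPerm n π) : leB J (Pshape π) ↔ IsBelow J π := by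
  have hn := isPerm_nodup hπ
  constructor
  · rintro ⟨n', σ₀, σ₁, h₀, h₁, rfl, hshape, hle⟩
    obtain rfl : n' = n := by
      rw [← isPerm_length h₁, ← isPerm_length hπ, ← sizeU_pshape_fst, hshape, sizeU_pshape_fst]
    have hp₀ : σ₀ ~ π := h₀.trans hπ.symm
    have hp₁ : σ₁ ~ π := h₁.trans hπ.symm
    obtain ⟨τ, hτπ, hτ, hτle⟩ := exists_sameEnds_inversionLE hp₀ hp₁ hn
      (inversionLE_of_permutoLe hle) ((pshape_eq_iff hp₁ hn).1 hshape)
    exact ⟨τ, hτπ, (pshape_eq_iff (hτπ.trans hp₀.symm) (isPerm_nodup h₀)).2 hτ, hτle⟩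
  · rintro ⟨σ, hσπ, hσ, hle⟩
    exact ⟨n, σ, π, hσπ.trans hπ, hπ, hσ, rfl, permutoLe_of_inversionLE hσπ hn hle⟩

end BaxterOrder

section Grafting

variable {u v w : List ℕ} {n : ℕ}

theorem sizeU_splitLE_add_sizeU_splitGT (T : BT) (n : ℕ) :
    sizeU (shape (splitLE T n)) + sizeU (shape (splitGT T n)) = sizeU (shape T) := by
  induction T with
  | leaf => rfl
  | node l b r ihl ihr =>
    rw [splitLE, splitGT]
    split_ifs <;> simp only [shape, sizeU] <;> omega

theorem eq_leaf_of_sizeU_shape {T : BT} (h : sizeU (shape T) = 0) : T = .leaf := by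
  cases T with
  | leaf => rfl
  | node l b r => simp [shape, sizeU] at h

theorem splitGT_eq_self {T : BT} (h : splitLE T n = .leaf) : splitGT T n = T := by
  induction T with
  | leaf => rfl
  | node l b r ihl _ =>
    rw [splitLE] at h
    split_ifs at h with hb
    rw [splitGT, if_neg hb, ihl h]

theorem splitLE_eq_self {T : BT} (h : splitGT T n = .leaf) : splitLE T n = T := by
  induction T with
  | leaf => rfl
  | node l b r _ ihr =>
    rw [splitGT] at h
    split_ifs at h with hb
    rw [splitLE, if_pos hb, ihr h]

theorem sizeU_graftL (t t' : UBT) : sizeU (graftL t t') = sizeU t + sizeU t' := by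
  induction t' with
  | leaf => rfl
  | node l r ihl _ => rw [graftL, sizeU, ihl, sizeU]; omega

theorem shape_split_of_shape_eq_graftR {T : BT} {t t' : UBT} (h : shape T = graftR t t')
    (hsize : sizeU (shape (splitLE T n)) = sizeU t) :
    shape (splitLE T n) = t ∧ shape (splitGT T n) = t' := by
  induction t generalizing T with
  | leaf =>
    have hleaf := eq_leaf_of_sizeU_shape hsize
    exact ⟨congrArg shape hleaf, by rw [splitGT_eq_self hleaf, h, graftR]⟩
  | node t₁ t₂ _ ih =>
    obtain _ | ⟨l, b, r⟩ := T
    · simp [shape, graftR] at h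
    simp only [shape, graftR, UBT.node.injEq] at h
    rw [splitLE] at hsize ⊢
    rw [splitGT]
    split_ifs at hsize ⊢ with hb
    · simp only [shape, sizeU, h.1] at hsize
      obtain ⟨hLE, hGT⟩ := ih h.2 (by omega)
      exact ⟨by rw [shape, h.1, hLE], hGT⟩
    · have := sizeU_splitLE_add_sizeU_splitGT l n
      rw [h.1, hsize, sizeU] at this
      omega

theorem shape_split_of_shape_eq_graftL {T : BT} {t t' : UBT} (h : shape T = graftL t t')
    (hsize : sizeU (shape (splitLE T n)) = sizeU t) :
    shape (splitLE T n) = t ∧ shape (splitGT T n) = t' := by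
  induction t' generalizing T with
  | leaf =>
    rw [graftL] at h
    have hadd := sizeU_splitLE_add_sizeU_splitGT T n
    have hleaf : splitGT T n = .leaf := eq_leaf_of_sizeU_shape (by rw [h] at hadd; omega)
    exact ⟨by rw [splitLE_eq_self hleaf, h], congrArg shape hleaf⟩
  | node t₁ t₂ ih _ =>
    obtain _ | ⟨l, b, r⟩ := T
    · simp [shape, graftL] at h
    simp only [shape, graftL, UBT.node.injEq] at h
    rw [splitLE] at hsize ⊢
    rw [splitGT]
    split_ifs at hsize ⊢ with hb
    · simp only [shape, sizeU, h.1, sizeU_graftL] at hsize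
      omega
    · obtain ⟨hLE, hGT⟩ := ih h.1 hsize
      exact ⟨hLE, by rw [shape, hGT, h.2]⟩

theorem shape_insL_append (h : ∀ x ∈ u, ∀ y ∈ v, x < y) :
    shape (insL (u ++ v)) = graftR (shape (insL u)) (shape (insL v)) := by
  induction u using pivot_induction with
  | nil => rfl
  | cons a u _ ih =>
    rw [List.forall_mem_cons] at h
    have hlt : v.filter (· < a) = [] :=
      List.filter_eq_nil_iff.2 fun y hy => by simpa using (h.1 y hy).le
    have hle : v.filter (a ≤ ·) = v :=
      List.filter_eq_self.2 fun y hy => by simpa using (h.1 y hy).le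
    rw [List.cons_append, insL_cons, insL_cons, List.filter_append, List.filter_append, hlt, hle,
      List.append_nil, shape, shape, graftR, ih fun x hx => h.2 x (List.mem_of_mem_filter hx)]

theorem shape_insL_append_of_gt (h : ∀ x ∈ u, ∀ y ∈ v, x < y) :
    shape (insL (v ++ u)) = graftL (shape (insL u)) (shape (insL v)) := by
  induction v using pivot_induction with
  | nil => rfl
  | cons b v ih _ =>
    have hlt : u.filter (· < b) = u :=
      List.filter_eq_self.2 fun x hx => by simpa using h x hx b List.mem_cons_self
    have hle : u.filter (b ≤ ·) = [] :=
      List.filter_eq_nil_iff.2 fun x hx => by simpa using h x hx b List.mem_cons_self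
    rw [List.cons_append, insL_cons, insL_cons, List.filter_append, List.filter_append, hlt, hle,
      List.append_nil, shape, shape, graftL,
      ih fun x hx y hy => h x hx y (List.mem_cons_of_mem b (List.mem_of_mem_filter hy))]

theorem pshape_append (hn : (u ++ v).Nodup) (h : ∀ x ∈ u, ∀ y ∈ v, x < y) :
    Pshape (u ++ v) = overJ (Pshape u) (Pshape v) := by
  obtain ⟨hu, hv, -⟩ := List.nodup_append.1 hn
  rw [pshape_eq hn, pshape_eq hu, pshape_eq hv, List.reverse_append, shape_insL_append h, overJ,
    shape_insL_append_of_gt fun x hx y hy => h x (List.mem_reverse.1 hx) y (List.mem_reverse.1 hy)]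

theorem pshape_filter_of_pshape_eq_overJ {J₀ J₁ : UBT × UBT} (hw : w.Nodup)
    (h : Pshape w = overJ J₀ J₁) (h₁ : (w.filter (· ≤ n)).length = sizeU J₀.1)
    (h₂ : (w.filter (· ≤ n)).length = sizeU J₀.2) :
    Pshape (w.filter (· ≤ n)) = J₀ ∧ Pshape (w.filter (n < ·)) = J₁ := by
  rw [pshape_eq hw, overJ, Prod.mk.injEq] at h
  obtain ⟨hleLE, hleGT⟩ := shape_split_of_shape_eq_graftR (n := n) h.1
    (by rw [splitLE_insL, sizeU_shape_insL, h₁])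
  obtain ⟨hriLE, hriGT⟩ := shape_split_of_shape_eq_graftL (n := n) h.2
    (by rw [splitLE_insL, sizeU_shape_insL, List.filter_reverse, List.length_reverse, h₂])
  rw [splitLE_insL] at hleLE hriLE
  rw [splitGT_insL] at hleGT hriGT
  rw [pshape_eq (hw.filter _), pshape_eq (hw.filter _), ← List.filter_reverse,
    ← List.filter_reverse, hleLE, hriLE, hleGT, hriGT]
  exact ⟨rfl, rfl⟩

theorem perm_filter_le_append_filter_lt (n : ℕ) (w : List ℕ) :
    w.filter (· ≤ n) ++ w.filter (n < ·) ~ w := by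
  simpa only [← decide_not, not_le] using List.filter_append_perm (· ≤ n) w

theorem IsBelow.append {J₀ J₁ : UBT × UBT} (hw : w.Nodup) (h₀ : IsBelow J₀ (w.filter (· ≤ n)))
    (h₁ : IsBelow J₁ (w.filter (n < ·))) : IsBelow (overJ J₀ J₁) w := by
  obtain ⟨σ, hσ, rfl, hσle⟩ := h₀
  obtain ⟨ν, hν, rfl, hνle⟩ := h₁
  have hlt : ∀ x ∈ σ, ∀ y ∈ ν, x < y := by
    intro x hx y hy
    have hxn := (List.mem_filter.1 (hσ.mem_iff.1 hx)).2
    have hny := (List.mem_filter.1 (hν.mem_iff.1 hy)).2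
    simp only [decide_eq_true_eq] at hxn hny
    exact hxn.trans_lt hny
  have hp : σ ++ ν ~ w := (hσ.append hν).trans (perm_filter_le_append_filter_lt n w)
  refine ⟨σ ++ ν, hp, pshape_append (hp.nodup_iff.2 hw) hlt, .append hlt ?_ ?_⟩
  · exact fun a d had h => (hσle had h).trans List.filter_sublist
  · exact fun a d had h => (hνle had h).trans List.filter_sublist

theorem isBelow_overJ_iff {J₀ J₁ : UBT × UBT} (hw : w.Nodup)
    (h₁ : (w.filter (· ≤ n)).length = sizeU J₀.1) (h₂ : (w.filter (· ≤ n)).length = sizeU J₀.2) :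
    IsBelow (overJ J₀ J₁) w ↔ IsBelow J₀ (w.filter (· ≤ n)) ∧ IsBelow J₁ (w.filter (n < ·)) := by
  refine ⟨?_, fun h => h.1.append hw h.2⟩
  rintro ⟨σ, hσ, hshape, hle⟩
  have hlen := (hσ.filter (· ≤ n)).length_eq
  obtain ⟨hLE, hGT⟩ := pshape_filter_of_pshape_eq_overJ (hσ.nodup_iff.2 hw) hshape
    (hlen.trans h₁) (hlen.trans h₂)
  exact ⟨⟨_, hσ.filter _, hLE, hle.filter _⟩, ⟨_, hσ.filter _, hGT, hle.filter _⟩⟩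

end Grafting

section Shift

variable {w : List ℕ} {f : ℕ → ℕ}

theorem shape_insL_map (hf : StrictMono f) (w : List ℕ) :
    shape (insL (w.map f)) = shape (insL w) := by
  induction w using pivot_induction with
  | nil => rfl
  | cons a w hl hr =>
    rw [List.map_cons, insL_cons, insL_cons, List.filter_map, List.filter_map, shape, shape, ← hl,
      ← hr]
    simp only [Function.comp_def, hf.lt_iff_lt, hf.le_iff_le]

theorem pshape_map (hf : StrictMono f) (hw : w.Nodup) : Pshape (w.map f) = Pshape w := by
  rw [pshape_eq hw, pshape_eq (hw.map hf.injective), ← List.map_reverse, shape_insL_map hf,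
    shape_insL_map hf]

theorem isBelow_map_iff (hf : StrictMono f) {J : UBT × UBT} (hw : w.Nodup) :
    IsBelow J (w.map f) ↔ IsBelow J w := by
  constructor
  · rintro ⟨σ, hσ, rfl, hle⟩
    obtain ⟨τ, rfl⟩ : σ ∈ Set.range (List.map f) := by
      rw [Set.range_list_map]
      exact fun x hx => (List.mem_map.1 (hσ.mem_iff.1 hx)).imp fun y hy => hy.2
    have hτ : τ ~ w := (List.map_perm_map_iff hf.injective).1 hσ
    exact ⟨τ, hτ, (pshape_map hf (hτ.nodup_iff.2 hw)).symm, (inversionLE_map_iff hf).1 hle⟩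
  · rintro ⟨σ, hσ, rfl, hle⟩
    exact ⟨σ.map f, hσ.map f, pshape_map hf (hσ.nodup_iff.2 hw), (inversionLE_map_iff hf).2 hle⟩

end Shift

section Shuffles

variable {u v π : List ℕ}

theorem shuffles_nil_left (v : List ℕ) : shuffles [] v = [v] := by rw [shuffles]

theorem shuffles_nil_right (u : List ℕ) : shuffles u [] = [u] := by cases u <;> simp [shuffles]

theorem nil_mem_shuffles : [] ∈ shuffles u v ↔ u = [] ∧ v = [] := by
  cases u <;> cases v <;> simp [shuffles]

theorem cons_mem_shuffles {a : ℕ} : a :: π ∈ shuffles u v ↔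
    (∃ u', u = a :: u' ∧ π ∈ shuffles u' v) ∨ ∃ v', v = a :: v' ∧ π ∈ shuffles u v' := by
  rcases u with - | ⟨b, u⟩
  · simp [shuffles_nil_left, eq_comm]
  rcases v with - | ⟨c, v⟩
  · simp [shuffles_nil_right, eq_comm]
  rw [shuffles, List.mem_append, List.mem_map, List.mem_map]
  grind

theorem mem_shuffles_iff_filter {p : ℕ → Prop} [DecidablePred p] (hu : ∀ x ∈ u, p x)
    (hv : ∀ y ∈ v, ¬p y) : π ∈ shuffles u v ↔ π.filter (p ·) = u ∧ π.filter (¬p ·) = v := by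
  induction π generalizing u v with
  | nil => simp [nil_mem_shuffles, eq_comm]
  | cons a π ih =>
    rw [cons_mem_shuffles]
    constructor
    · rintro (⟨u', rfl, h⟩ | ⟨v', rfl, h⟩)
      · rw [List.forall_mem_cons] at hu
        simpa [hu.1] using (ih hu.2 hv).1 h
      · rw [List.forall_mem_cons] at hv
        simpa [hv.1] using (ih hu hv.2).1 h
    · rintro ⟨rfl, rfl⟩
      by_cases ha : p a
      · exact .inl ⟨π.filter (p ·), by simp [ha], (ih (by simp) hv).2 (by simp [ha])⟩
      · exact .inr ⟨π.filter (¬p ·), by simp [ha], (ih hu (by simp)).2 (by simp [ha])⟩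

theorem nodup_shuffles (huv : u.Disjoint v) : (shuffles u v).Nodup := by
  fun_induction shuffles u v with
  | case1 v => exact List.nodup_singleton v
  | case2 u => exact List.nodup_singleton u
  | case3 a u b v ihu ihv =>
    have hab : a ≠ b := by
      rintro rfl
      exact huv List.mem_cons_self List.mem_cons_self
    refine ((ihu (List.disjoint_of_disjoint_cons_left huv)).map List.cons_injective).append
      ((ihv (List.disjoint_of_disjoint_cons_right huv)).map List.cons_injective) ?_
    simp only [List.disjoint_left, List.mem_map]
    rintro _ ⟨π, -, rfl⟩ ⟨π', -, h⟩
    exact hab (List.cons_eq_cons.1 h).1.symm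

end Shuffles

section ShiftedShuffles

variable {n m : ℕ} {u v w π σ ν : List ℕ}

/-- The restriction of a word to the letters at most `n`. -/
def lower (n : ℕ) (w : List ℕ) : List ℕ := w.filter (· ≤ n)

/-- The restriction of a word to the letters greater than `n`, each lowered by `n`. -/
def upper (n : ℕ) (w : List ℕ) : List ℕ := (w.filter (n < ·)).map (· - n)

theorem map_add_upper (n : ℕ) (w : List ℕ) : (upper n w).map (· + n) = w.filter (n < ·) := by
  rw [upper, List.map_map]
  refine (List.map_congr_left fun x hx => ?_).trans (List.map_id _)
  exact Nat.sub_add_cancel (of_decide_eq_true (List.mem_filter.1 hx).2).le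

theorem upper_eq_iff : upper n w = ν ↔ w.filter (n < ·) = ν.map (· + n) := by
  rw [← map_add_upper, (List.map_injective_iff.2 (add_left_injective n)).eq_iff]

theorem lower_append_map_add (hu : ∀ x ∈ u, x ≤ n) (hv : ∀ y ∈ v, 0 < y) :
    lower n (u ++ v.map (· + n)) = u := by
  rw [lower, List.filter_append, List.filter_eq_self.2, List.filter_eq_nil_iff.2, List.append_nil]
  · simpa using hv
  · simpa using hu

theorem upper_append_map_add (hu : ∀ x ∈ u, x ≤ n) (hv : ∀ y ∈ v, 0 < y) :
    upper n (u ++ v.map (· + n)) = v := by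
  rw [upper_eq_iff, List.filter_append, List.filter_eq_nil_iff.2, List.filter_eq_self.2,
    List.nil_append]
  · simpa using hv
  · simpa using hu

theorem range'_one_add (n m : ℕ) :
    List.range' 1 (n + m) = List.range' 1 n ++ (List.range' 1 m).map (· + n) := by
  simp only [add_comm _ n]
  rw [List.map_add_range', ← List.range'_append_1, add_comm 1 n]

theorem le_of_isPerm (hσ : IsPerm n σ) : ∀ x ∈ σ, x ≤ n := fun x hx => by
  have := hσ.mem_iff.1 hx
  rw [List.mem_range'_1] at this
  omega

theorem pos_of_isPerm (hσ : IsPerm n σ) : ∀ x ∈ σ, 0 < x := fun _ hx =>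
  (List.mem_range'_1.1 (hσ.mem_iff.1 hx)).1

theorem isPerm_add_iff : IsPerm (n + m) π ↔ IsPerm n (lower n π) ∧ IsPerm m (upper n π) := by
  constructor
  · intro h
    have hn := le_of_isPerm (.refl (List.range' 1 n))
    have hm := pos_of_isPerm (.refl (List.range' 1 m))
    rw [IsPerm, range'_one_add] at h
    have hl : lower n π ~ lower n _ := h.filter _
    have hu : upper n π ~ upper n _ := (h.filter _).map _
    rw [lower_append_map_add hn hm] at hl
    rw [upper_append_map_add hn hm] at hu
    exact ⟨hl, hu⟩
  · rintro ⟨hl, hu⟩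
    calc π ~ lower n π ++ (upper n π).map (· + n) := by
          rw [map_add_upper]
          exact (perm_filter_le_append_filter_lt n π).symm
      _ ~ List.range' 1 n ++ (List.range' 1 m).map (· + n) := hl.append (hu.map _)
      _ = List.range' 1 (n + m) := (range'_one_add n m).symm

theorem mem_shShuffles (hσ : IsPerm n σ) (hν : IsPerm m ν) :
    π ∈ shShuffles σ ν ↔ lower n π = σ ∧ upper n π = ν := by
  rw [shShuffles, isPerm_length hσ, mem_shuffles_iff_filter (p := (· ≤ n)) (le_of_isPerm hσ),
    upper_eq_iff, lower]
  · simp only [not_le]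
  · simpa using pos_of_isPerm hν

theorem nodup_shShuffles (hσ : IsPerm n σ) (hν : IsPerm m ν) : (shShuffles σ ν).Nodup := by
  rw [shShuffles, isPerm_length hσ]
  refine nodup_shuffles fun x hx hx' => ?_
  obtain ⟨y, hy, rfl⟩ := List.mem_map.1 hx'
  have := le_of_isPerm hσ _ hx
  have := pos_of_isPerm hν y hy
  omega

end ShiftedShuffles

section Product

variable {n m : ℕ}

/-- The product of two fundamental basis elements of FQSym. -/
noncomputable def fMul (σ ν : List ℕ) : FQSym :=
  ((shShuffles σ ν).map fun π => Finsupp.single π (1 : ℚ)).sum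

theorem fqMul_eq_linearCombination (x y : FQSym) : fqMul x y =
    Finsupp.linearCombination ℚ (fun σ => Finsupp.linearCombination ℚ (fMul σ)) x y := by
  simp [fqMul, Finsupp.linearCombination_apply, fMul, List.smul_sum, Finsupp.sum,
    Function.comp_def, Finset.smul_sum]

/-- The sum of the fundamental basis elements of FQSym indexed by the permutations of size `n`
satisfying `A`. -/
noncomputable def permSum (n : ℕ) (A : List ℕ → Prop) : FQSym :=
  (((permsOf n).filter fun σ => decide (A σ)).map fun σ => Finsupp.single σ (1 : ℚ)).sum

/-- The finite set of permutations of size `n` satisfying `A`. -/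
noncomputable def permFinset (n : ℕ) (A : List ℕ → Prop) : Finset (List ℕ) :=
  ((permsOf n).filter fun σ => decide (A σ)).toFinset

theorem mem_permFinset {A : List ℕ → Prop} {σ : List ℕ} :
    σ ∈ permFinset n A ↔ IsPerm n σ ∧ A σ := by
  simp [permFinset, permsOf, IsPerm]

theorem permSum_eq_sum (n : ℕ) (A : List ℕ → Prop) :
    permSum n A = ∑ σ ∈ permFinset n A, Finsupp.single σ (1 : ℚ) := by
  rw [permSum, permFinset, List.sum_toFinset]
  exact (List.nodup_permutations _ List.nodup_range').filter _

theorem fqMul_permSum {A B C : List ℕ → Prop}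
    (h : ∀ π, IsPerm (n + m) π → (C π ↔ A (lower n π) ∧ B (upper n π))) :
    fqMul (permSum n A) (permSum m B) = permSum (n + m) C := by
  have hmaps : ∀ π ∈ permFinset (n + m) C,
      (lower n π, upper n π) ∈ permFinset n A ×ˢ permFinset m B := by
    intro π hπ
    rw [mem_permFinset] at hπ
    obtain ⟨hA, hB⟩ := (h π hπ.1).1 hπ.2
    obtain ⟨hl, hu⟩ := isPerm_add_iff.1 hπ.1
    exact Finset.mk_mem_product (mem_permFinset.2 ⟨hl, hA⟩) (mem_permFinset.2 ⟨hu, hB⟩)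
  have hfiber : ∀ p ∈ permFinset n A ×ˢ permFinset m B, fMul p.1 p.2 =
      ∑ π ∈ permFinset (n + m) C with (lower n π, upper n π) = p, Finsupp.single π (1 : ℚ) := by
    rintro ⟨σ, ν⟩ hp
    obtain ⟨⟨hσ, hA⟩, ⟨hν, hB⟩⟩ := (Finset.mem_product.1 hp).imp mem_permFinset.1 mem_permFinset.1
    rw [fMul, ← List.sum_toFinset _ (nodup_shShuffles hσ hν)]
    congr 1
    ext π
    rw [List.mem_toFinset, mem_shShuffles hσ hν, Finset.mem_filter, mem_permFinset, Prod.mk.injEq]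
    refine ⟨?_, And.right⟩
    rintro ⟨rfl, rfl⟩
    have hπ := isPerm_add_iff.2 ⟨hσ, hν⟩
    exact ⟨⟨hπ, (h π hπ).2 ⟨hA, hB⟩⟩, rfl, rfl⟩
  rw [fqMul_eq_linearCombination, permSum_eq_sum, permSum_eq_sum, permSum_eq_sum,
    ← Finset.sum_fiberwise_of_maps_to hmaps, ← Finset.sum_congr rfl hfiber,
    Finset.sum_product_right]
  simp

end Product

section Multiplicativity

variable {n m : ℕ} {J₀ J₁ J K : UBT × UBT} {π : List ℕ}

theorem leB_overJ_iff (h₁ : sizeU J₀.1 = n) (h₂ : sizeU J₀.2 = n) (hπ : IsPerm (n + m) π) :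
    leB (overJ J₀ J₁) (Pshape π) ↔
      leB J₀ (Pshape (lower n π)) ∧ leB J₁ (Pshape (upper n π)) := by
  obtain ⟨hl, hu⟩ := isPerm_add_iff.1 hπ
  have hlen : (π.filter (· ≤ n)).length = n := isPerm_length hl
  rw [leB_pshape_iff_isBelow hπ, leB_pshape_iff_isBelow hl, leB_pshape_iff_isBelow hu,
    isBelow_overJ_iff (isPerm_nodup hπ) (hlen.trans h₁.symm) (hlen.trans h₂.symm),
    ← map_add_upper, isBelow_map_iff (add_left_strictMono (a := n)) (isPerm_nodup hu), lower]

theorem isPerm_reverse (h : IsPerm n π) : IsPerm n π.reverse := (List.reverse_perm π).trans h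

theorem leB_swap (h : leB J K) : leB K.swap J.swap := by
  obtain ⟨n, σ, ν, hσ, hν, rfl, rfl, hle⟩ := h
  exact ⟨n, ν.reverse, σ.reverse, isPerm_reverse hν, isPerm_reverse hσ,
    pshape_reverse (isPerm_nodup hν), pshape_reverse (isPerm_nodup hσ), permutoLe_reverse hle⟩

theorem leB_pshape_reverse_iff (hπ : IsPerm n π) :
    leB J.swap (Pshape π.reverse) ↔ leB (Pshape π) J := by
  rw [pshape_reverse (isPerm_nodup hπ)]
  exact ⟨leB_swap, leB_swap⟩

theorem leB_underJ_iff (h₁ : sizeU J₀.1 = n) (h₂ : sizeU J₀.2 = n) (hπ : IsPerm (n + m) π) :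
    leB (Pshape π) (underJ J₀ J₁) ↔
      leB (Pshape (lower n π)) J₀ ∧ leB (Pshape (upper n π)) J₁ := by
  obtain ⟨hl, hu⟩ := isPerm_add_iff.1 hπ
  have hlower : lower n π.reverse = (lower n π).reverse := by
    rw [lower, List.filter_reverse, lower]
  have hupper : upper n π.reverse = (upper n π).reverse := by
    rw [upper, List.filter_reverse, List.map_reverse, upper]
  rw [← leB_pshape_reverse_iff hπ, ← leB_pshape_reverse_iff hl, ← leB_pshape_reverse_iff hu,
    ← hlower, ← hupper]
  exact leB_overJ_iff (J₀ := J₀.swap) (J₁ := J₁.swap) h₂ h₁ (isPerm_reverse hπ)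

theorem fqMul_EJ (h₁ : sizeU J₀.1 = n) (h₂ : sizeU J₀.2 = n) :
    fqMul (EJ n J₀) (EJ m J₁) = EJ (n + m) (overJ J₀ J₁) :=
  fqMul_permSum fun _ => leB_overJ_iff h₁ h₂

theorem fqMul_HJ (h₁ : sizeU J₀.1 = n) (h₂ : sizeU J₀.2 = n) :
    fqMul (HJ n J₀) (HJ m J₁) = HJ (n + m) (underJ J₀ J₁) :=
  fqMul_permSum fun _ => leB_underJ_iff h₁ h₂

end Multiplicativity

end Baxter

/-- the elementary and homogeneous bases of Baxter are
multiplicative: `E_{J0} · E_{J1} = E_{J0 / J1}` and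
`H_{J0} · H_{J1} = H_{J0 \ J1}`. -/
theorem multiplicative_bases (n m : ℕ) (J0 J1 : UBT × UBT)
    (h0 : IsTwin J0) (h1 : IsTwin J1)
    (hn : sizeU J0.1 = n) (hm : sizeU J1.1 = m) :
    fqMul (EJ n J0) (EJ m J1) = EJ (n + m) (overJ J0 J1) ∧
    fqMul (HJ n J0) (HJ m J1) = HJ (n + m) (underJ J0 J1) := by
  have h₂ : sizeU J0.2 = n := by rw [← h0.1, hn]
  exact ⟨Baxter.fqMul_EJ hn h₂, Baxter.fqMul_HJ hn h₂⟩
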